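/- Suppose (P) has a KKT point (Assumption 1). Let {μ_k}_{k≥1} ⊂ (0, ∞) be nondecreasing with μ_k → ∞, and let {ξ_k}_{k≥1} ⊂ [0, ∞) satisfy Σ_{k=1}^∞ √(2 ξ_k μ_k) < ∞. Let {x_k}_{k≥1} ⊆ χ, y₁ = 0, y_{k+1} = μ_k·( Π_K(Ax_k − b − y_k/μ_k) − (Ax_k − b − y_k/μ_k) ), and suppose L_{μ_k}(x_k, y_k) ≤ g_{μ_k}(y_k) + ξ_k for all k ≥ 1. Then the sequence {y_k} converges to a limit ȳ, and ȳ is a KKT point of (P): ȳ ∈ K* and g₀(ȳ) = p*. -/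

import Mathlib

open RealInnerProductSpace Metric

/-- The dual cone `K* = {y : ⟪y, s⟫ ≥ 0 for all s ∈ K}`. -/
def dualCone {m : ℕ} (K : Set (EuclideanSpace ℝ (Fin m))) :
    Set (EuclideanSpace ℝ (Fin m)) :=
  {y | ∀ s ∈ K, 0 ≤ ⟪y, s⟫}

/-- The penalty Lagrangian
`L_μ(x, y) = p(x) + (μ/2)·d_K(Ax - b - y/μ)² - ‖y‖²/(2μ)`. -/
noncomputable def Lpen {n m : ℕ}
    (A : EuclideanSpace ℝ (Fin n) →L[ℝ] EuclideanSpace ℝ (Fin m))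
    (b : EuclideanSpace ℝ (Fin m)) (K : Set (EuclideanSpace ℝ (Fin m)))
    (p : EuclideanSpace ℝ (Fin n) → ℝ) (μ : ℝ)
    (x : EuclideanSpace ℝ (Fin n)) (y : EuclideanSpace ℝ (Fin m)) : ℝ :=
  p x + μ / 2 * (infDist (A x - b - μ⁻¹ • y) K) ^ 2 - ‖y‖ ^ 2 / (2 * μ)

/-- `g_μ(y) = inf_{x ∈ χ} L_μ(x, y)`. -/
noncomputable def gmu {n m : ℕ}
    (A : EuclideanSpace ℝ (Fin n) →L[ℝ] EuclideanSpace ℝ (Fin m))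
    (b : EuclideanSpace ℝ (Fin m)) (K : Set (EuclideanSpace ℝ (Fin m)))
    (χ : Set (EuclideanSpace ℝ (Fin n)))
    (p : EuclideanSpace ℝ (Fin n) → ℝ) (μ : ℝ) (y : EuclideanSpace ℝ (Fin m)) : ℝ :=
  sInf ((fun x => Lpen A b K p μ x y) '' χ)

/-- The Lagrangian dual function `g₀(z) = inf_{x ∈ χ} { p(x) - ⟪z, Ax - b⟫ }`. -/
noncomputable def gzero {n m : ℕ}
    (A : EuclideanSpace ℝ (Fin n) →L[ℝ] EuclideanSpace ℝ (Fin m))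
    (b : EuclideanSpace ℝ (Fin m)) (χ : Set (EuclideanSpace ℝ (Fin n)))
    (p : EuclideanSpace ℝ (Fin n) → ℝ) (z : EuclideanSpace ℝ (Fin m)) : ℝ :=
  sInf ((fun x => p x - ⟪z, A x - b⟫) '' χ)

/-- The optimal value `p* = inf { p(x) : x ∈ χ, Ax - b ∈ K }` of the conic program (P). -/
noncomputable def pstar {n m : ℕ}
    (A : EuclideanSpace ℝ (Fin n) →L[ℝ] EuclideanSpace ℝ (Fin m))
    (b : EuclideanSpace ℝ (Fin m)) (K : Set (EuclideanSpace ℝ (Fin m)))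
    (χ : Set (EuclideanSpace ℝ (Fin n)))
    (p : EuclideanSpace ℝ (Fin n) → ℝ) : ℝ :=
  sInf (p '' {x ∈ χ | A x - b ∈ K})

section Helpers

theorem aux_proj {m : ℕ} {K : Set (EuclideanSpace ℝ (Fin m))} (hKcv : Convex ℝ K)
    (hKcone : ∀ (c : ℝ), 0 ≤ c → ∀ x ∈ K, c • x ∈ K)
    {PK : EuclideanSpace ℝ (Fin m) → EuclideanSpace ℝ (Fin m)}
    (hPKmem : ∀ v, PK v ∈ K)
    (hPK : ∀ v, ∀ s ∈ K, ‖v - PK v‖ ≤ ‖v - s‖) (v : EuclideanSpace ℝ (Fin m)) :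
    (∀ s ∈ K, 0 ≤ ⟪PK v - v, s⟫) ∧ ⟪PK v - v, PK v⟫ = 0 := by
  have hne : Nonempty K := ⟨⟨PK v, hPKmem v⟩⟩
  have h1 : ‖v - PK v‖ = ⨅ w : K, ‖v - w‖ := by
    apply le_antisymm
    · exact le_ciInf fun w => hPK v w w.2
    · exact ciInf_le (f := fun w : K => ‖v - w‖)
        ⟨0, by rintro _ ⟨w, rfl⟩; exact norm_nonneg _⟩ ⟨PK v, hPKmem v⟩
  have h2 := (norm_eq_iInf_iff_real_inner_le_zero hKcv (hPKmem v)).1 h1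
  have h3 := h2 ((0:ℝ) • PK v) (hKcone 0 le_rfl _ (hPKmem v))
  have h4 := h2 ((2:ℝ) • PK v) (hKcone 2 (by norm_num) _ (hPKmem v))
  simp only [inner_sub_left, inner_sub_right, real_inner_smul_right] at h2 h3 h4 ⊢
  have h5 : ⟪PK v, PK v⟫ - ⟪v, PK v⟫ = 0 := by linarith
  refine ⟨fun s hs => ?_, h5⟩
  have := h2 s hs
  linarith

theorem aux_infDist {m : ℕ} {K : Set (EuclideanSpace ℝ (Fin m))}
    {PK : EuclideanSpace ℝ (Fin m) → EuclideanSpace ℝ (Fin m)}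
    (hPKmem : ∀ v, PK v ∈ K)
    (hPK : ∀ v, ∀ s ∈ K, ‖v - PK v‖ ≤ ‖v - s‖) (v : EuclideanSpace ℝ (Fin m)) :
    infDist v K = ‖v - PK v‖ := by
  apply le_antisymm
  · rw [← dist_eq_norm]; exact infDist_le_dist_of_mem (hPKmem v)
  · rw [le_infDist ⟨_, hPKmem v⟩]
    intro s hs
    rw [dist_eq_norm]; exact hPK v s hs

theorem aux_phi {n m : ℕ} {K : Set (EuclideanSpace ℝ (Fin m))}
    {PK : EuclideanSpace ℝ (Fin m) → EuclideanSpace ℝ (Fin m)}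
    (hPKmem : ∀ v, PK v ∈ K)
    (hPK : ∀ v, ∀ s ∈ K, ‖v - PK v‖ ≤ ‖v - s‖)
    (A : EuclideanSpace ℝ (Fin n) →L[ℝ] EuclideanSpace ℝ (Fin m))
    (b : EuclideanSpace ℝ (Fin m)) (p : EuclideanSpace ℝ (Fin n) → ℝ)
    {μ : ℝ} (hμ : 0 < μ) (x : EuclideanSpace ℝ (Fin n)) (y z : EuclideanSpace ℝ (Fin m)) :
    p x - ⟪z, A x - b⟫ - ‖z - y‖ ^ 2 / (2 * μ)
      + ‖z - μ • (PK (A x - b - μ⁻¹ • y) - (A x - b - μ⁻¹ • y))‖ ^ 2 / (2 * μ)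
    = Lpen A b K p μ x y - ⟪z, PK (A x - b - μ⁻¹ • y)⟫ := by
  unfold Lpen
  rw [aux_infDist hPKmem hPK]
  obtain ⟨v, hv⟩ : ∃ v, v = A x - b - μ⁻¹ • y := ⟨_, rfl⟩
  have hAx : A x - b = v + μ⁻¹ • y := by rw [hv]; abel
  rw [← hv, hAx]
  generalize PK v = q
  rw [norm_sub_sq_real z y, norm_sub_sq_real z (μ • (q - v)), norm_smul, norm_sub_rev v q,
    mul_pow, Real.norm_eq_abs, sq_abs]
  simp only [inner_sub_right, inner_add_right, real_inner_smul_right]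
  field_simp
  ring

theorem aux_saddle {n m : ℕ} {K : Set (EuclideanSpace ℝ (Fin m))}
    {PK : EuclideanSpace ℝ (Fin m) → EuclideanSpace ℝ (Fin m)}
    (hPKmem : ∀ v, PK v ∈ K)
    (hPK : ∀ v, ∀ s ∈ K, ‖v - PK v‖ ≤ ‖v - s‖)
    (A : EuclideanSpace ℝ (Fin n) →L[ℝ] EuclideanSpace ℝ (Fin m))
    (b : EuclideanSpace ℝ (Fin m))
    {χ : Set (EuclideanSpace ℝ (Fin n))}
    (hχcv : Convex ℝ χ)
    {p : EuclideanSpace ℝ (Fin n) → ℝ} (hp : ConvexOn ℝ Set.univ p)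
    {μ : ℝ} (hμ : 0 < μ) (y : EuclideanSpace ℝ (Fin m))
    {w : EuclideanSpace ℝ (Fin n)} (hw : w ∈ χ)
    (hmin : ∀ x ∈ χ, Lpen A b K p μ w y ≤ Lpen A b K p μ x y)
    (x : EuclideanSpace ℝ (Fin n)) (hx : x ∈ χ) :
    p w - ⟪μ • (PK (A w - b - μ⁻¹ • y) - (A w - b - μ⁻¹ • y)), A w - b⟫
      ≤ p x - ⟪μ • (PK (A w - b - μ⁻¹ • y) - (A w - b - μ⁻¹ • y)), A x - b⟫ := by
  obtain ⟨v, hv⟩ : ∃ v, v = A w - b - μ⁻¹ • y := ⟨_, rfl⟩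
  have hAw : A w - b = v + μ⁻¹ • y := by rw [hv]; abel
  rw [← hv]
  obtain ⟨h, hh⟩ : ∃ h, h = A x - A w := ⟨_, rfl⟩
  have hAx : A x - b = A w - b + h := by rw [hh]; abel
  have key : ∀ t : ℝ, 0 < t → t ≤ 1 →
      0 ≤ (p x - p w - μ * ⟪PK v - v, h⟫) + t * (μ / 2 * ‖h‖ ^ 2) := by
    intro t ht ht1
    have hxt : (1 - t) • w + t • x ∈ χ := hχcv hw hx (by linarith) ht.le (by ring)
    have h1 := hmin _ hxt
    have h2 := hp.2 (Set.mem_univ w) (Set.mem_univ x) (by linarith : 0 ≤ 1 - t) ht.le (by ring)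
    unfold Lpen at h1
    have hAt : A ((1 - t) • w + t • x) - b - μ⁻¹ • y = v + t • h := by
      rw [hv, hh]; simp only [map_add, map_smul]; module
    rw [hAt, ← hv, aux_infDist hPKmem hPK v] at h1
    have h3 : infDist (v + t • h) K ≤ ‖v + t • h - PK v‖ := by
      rw [← dist_eq_norm]; exact infDist_le_dist_of_mem (hPKmem v)
    have h4 : infDist (v + t • h) K ^ 2 ≤ ‖v + t • h - PK v‖ ^ 2 :=
      pow_le_pow_left₀ infDist_nonneg h3 2
    have h5 : ‖v + t • h - PK v‖ ^ 2
        = ‖v - PK v‖ ^ 2 - 2 * t * ⟪PK v - v, h⟫ + t ^ 2 * ‖h‖ ^ 2 := by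
      rw [show v + t • h - PK v = (v - PK v) + t • h by abel, norm_add_sq_real, norm_smul,
        mul_pow, Real.norm_eq_abs, sq_abs]
      simp only [inner_sub_left, real_inner_smul_right]
      ring
    have h6 : μ / 2 * infDist (v + t • h) K ^ 2 ≤ μ / 2 * ‖v + t • h - PK v‖ ^ 2 :=
      mul_le_mul_of_nonneg_left h4 (by positivity)
    rw [h5] at h6
    simp only [smul_eq_mul] at h2
    have h7 : 0 ≤ t * ((p x - p w - μ * ⟪PK v - v, h⟫) + t * (μ / 2 * ‖h‖ ^ 2)) := by
      nlinarith
    exact nonneg_of_mul_nonneg_right h7 ht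
  have key2 : 0 ≤ p x - p w - μ * ⟪PK v - v, h⟫ := by
    have ht : Filter.Tendsto (fun t : ℝ => (p x - p w - μ * ⟪PK v - v, h⟫) + t * (μ / 2 * ‖h‖ ^ 2))
        (nhdsWithin 0 (Set.Ioi 0)) (nhds ((p x - p w - μ * ⟪PK v - v, h⟫) + 0 * (μ / 2 * ‖h‖ ^ 2))) := by
      apply Filter.Tendsto.mono_left _ nhdsWithin_le_nhds
      apply Continuous.tendsto
      fun_prop
    rw [zero_mul, add_zero] at ht
    refine ge_of_tendsto ht ?_
    filter_upwards [Ioc_mem_nhdsGT (zero_lt_one' ℝ)] with t ht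
    exact key t ht.1 ht.2
  rw [hAx, inner_add_right, real_inner_smul_left _ h]
  linarith

/-- One step of the inexact proximal point method. -/
theorem aux_step {n m : ℕ} {K : Set (EuclideanSpace ℝ (Fin m))} (hKcv : Convex ℝ K)
    (hKcone : ∀ (c : ℝ), 0 ≤ c → ∀ x ∈ K, c • x ∈ K)
    {PK : EuclideanSpace ℝ (Fin m) → EuclideanSpace ℝ (Fin m)}
    (hPKmem : ∀ v, PK v ∈ K)
    (hPK : ∀ v, ∀ s ∈ K, ‖v - PK v‖ ≤ ‖v - s‖)
    (A : EuclideanSpace ℝ (Fin n) →L[ℝ] EuclideanSpace ℝ (Fin m))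
    (b : EuclideanSpace ℝ (Fin m))
    {χ : Set (EuclideanSpace ℝ (Fin n))} (hχne : χ.Nonempty) (hχcp : IsCompact χ)
    (hχcv : Convex ℝ χ)
    {p : EuclideanSpace ℝ (Fin n) → ℝ} (hp : ConvexOn ℝ Set.univ p) (hpc : Continuous p)
    {μ : ℝ} (hμ : 0 < μ) (y : EuclideanSpace ℝ (Fin m)) {ξ : ℝ}
    {x : EuclideanSpace ℝ (Fin n)} (hx : x ∈ χ)
    (hL : Lpen A b K p μ x y ≤ gmu A b K χ p μ y + ξ) :
    ∃ z ∈ dualCone K, ∃ c : ℝ, (∀ x ∈ χ, c ≤ p x - ⟪z, A x - b⟫) ∧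
      ‖μ • (PK (A x - b - μ⁻¹ • y) - (A x - b - μ⁻¹ • y)) - z‖ ≤ Real.sqrt (2 * ξ * μ) ∧
      ∀ u ∈ dualCone K, ∀ d : ℝ, (∀ x ∈ χ, d ≤ p x - ⟪u, A x - b⟫) →
        d ≤ c + ⟪z - y, u - z⟫ / μ := by
  have hLc : Continuous fun x => Lpen A b K p μ x y := by
    unfold Lpen
    have : Continuous fun x => infDist (A x - b - μ⁻¹ • y) K :=
      (continuous_infDist_pt K).comp (by fun_prop)
    fun_prop
  obtain ⟨w, hw, hmin'⟩ := hχcp.exists_isMinOn hχne hLc.continuousOn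
  have hmin : ∀ x ∈ χ, Lpen A b K p μ w y ≤ Lpen A b K p μ x y := fun x hx => hmin' hx
  have hg : gmu A b K χ p μ y ≤ Lpen A b K p μ w y := by
    apply csInf_le
    · exact ⟨Lpen A b K p μ w y, by rintro _ ⟨x, hx, rfl⟩; exact hmin x hx⟩
    · exact ⟨w, hw, rfl⟩
  have hsad := aux_saddle hPKmem hPK A b hχcv hp hμ y hw hmin
  have hphiw := aux_phi hPKmem hPK A b p hμ w y
  have hphix := aux_phi hPKmem hPK A b p hμ x y
  obtain ⟨hpj1, hpj2⟩ := aux_proj hKcv hKcone hPKmem hPK (A w - b - μ⁻¹ • y)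
  obtain ⟨z, hz⟩ : ∃ z, z = μ • (PK (A w - b - μ⁻¹ • y) - (A w - b - μ⁻¹ • y)) := ⟨_, rfl⟩
  have hzK : z ∈ dualCone K := by
    intro s hs
    rw [hz, real_inner_smul_left]
    exact mul_nonneg hμ.le (hpj1 s hs)
  have hz0 : ⟪z, PK (A w - b - μ⁻¹ • y)⟫ = 0 := by
    rw [hz, real_inner_smul_left, hpj2, mul_zero]
  have hq : PK (A w - b - μ⁻¹ • y) = (A w - b) + μ⁻¹ • (z - y) := by
    rw [hz, smul_sub, smul_smul, inv_mul_cancel₀ hμ.ne', one_smul]; abel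
  rw [← hz] at hsad hphiw
  refine ⟨z, hzK, p w - ⟪z, A w - b⟫, hsad, ?_, ?_⟩
  · have h1 := hphiw z
    have h2 := hphix z
    rw [hz0, sub_self, norm_zero] at h1
    have h3 := hzK _ (hPKmem (A x - b - μ⁻¹ • y))
    have h4 := hsad x hx
    apply Real.le_sqrt_of_sq_le
    rw [norm_sub_rev]
    have h5 : ‖z - μ • (PK (A x - b - μ⁻¹ • y) - (A x - b - μ⁻¹ • y))‖ ^ 2 / (2 * μ) ≤ ξ := by
      norm_num at h1
      linarith
    rw [div_le_iff₀ (by positivity)] at h5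
    linarith
  · intro u hu d hd
    have h1 := hd w hw
    have h2 := hu _ (hPKmem (A w - b - μ⁻¹ • y))
    rw [hq] at h2 hz0
    have h3 : ⟪z - y, u - z⟫ / μ = ⟪u, μ⁻¹ • (z - y)⟫ - ⟪z, μ⁻¹ • (z - y)⟫ := by
      rw [real_inner_smul_right, real_inner_smul_right, inner_sub_right, real_inner_comm u,
        real_inner_comm z]
      field_simp
    rw [inner_add_right] at h2 hz0
    rw [h3]
    linarith

end Helpers

/-- convergence of the dual ALCC iterates. If (P) has a KKT point,
`{μ_k}` is nondecreasing with `μ_k → ∞`, `Σ_{k≥1} √(2 ξ_k μ_k) < ∞`,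
`L_{μ_k}(x_k, y_k) ≤ g_{μ_k}(y_k) + ξ_k` and the duals are updated by `y₁ = 0`,
`y_{k+1} = μ_k (Π_K(Ax_k - b - y_k/μ_k) - (Ax_k - b - y_k/μ_k))`, then `{y_k}`
converges to some `ȳ` which is a KKT point of (P): `ȳ ∈ K*` and `g₀(ȳ) = p*`. -/
theorem stmt_19 {n m : ℕ} (K : Set (EuclideanSpace ℝ (Fin m)))
    (hKne : K.Nonempty) (hKcl : IsClosed K) (hKcv : Convex ℝ K)
    (hKcone : ∀ (c : ℝ), 0 ≤ c → ∀ x ∈ K, c • x ∈ K)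
    (A : EuclideanSpace ℝ (Fin n) →L[ℝ] EuclideanSpace ℝ (Fin m))
    (b : EuclideanSpace ℝ (Fin m))
    (χ : Set (EuclideanSpace ℝ (Fin n)))
    (hχne : χ.Nonempty) (hχcp : IsCompact χ) (hχcv : Convex ℝ χ)
    (p : EuclideanSpace ℝ (Fin n) → ℝ) (hp : ConvexOn ℝ Set.univ p)
    (hfeas : {x ∈ χ | A x - b ∈ K}.Nonempty)
    (hKKT : ∃ ystar ∈ dualCone K, gzero A b χ p ystar = pstar A b K χ p)
    -- `PK` is the Euclidean projection onto `K`
    (PK : EuclideanSpace ℝ (Fin m) → EuclideanSpace ℝ (Fin m))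
    (hPKmem : ∀ v, PK v ∈ K)
    (hPK : ∀ v, ∀ s ∈ K, ‖v - PK v‖ ≤ ‖v - s‖)
    (μ : ℕ → ℝ) (hμpos : ∀ k, 1 ≤ k → 0 < μ k)
    (hμmono : ∀ k, 1 ≤ k → μ k ≤ μ (k + 1))
    (hμtop : Filter.Tendsto μ Filter.atTop Filter.atTop)
    (ξ : ℕ → ℝ) (hξ : ∀ k, 1 ≤ k → 0 ≤ ξ k)
    (hsum : Summable (fun k : ℕ => Real.sqrt (2 * ξ (k + 1) * μ (k + 1))))
    (x : ℕ → EuclideanSpace ℝ (Fin n)) (hx : ∀ k, 1 ≤ k → x k ∈ χ)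
    (y : ℕ → EuclideanSpace ℝ (Fin m)) (hy1 : y 1 = 0)
    (hyrec : ∀ k, 1 ≤ k → y (k + 1)
      = μ k • (PK (A (x k) - b - (μ k)⁻¹ • y k) - (A (x k) - b - (μ k)⁻¹ • y k)))
    (hL : ∀ k, 1 ≤ k →
      Lpen A b K p (μ k) (x k) (y k) ≤ gmu A b K χ p (μ k) (y k) + ξ k) :
    ∃ ybar : EuclideanSpace ℝ (Fin m),
      Filter.Tendsto y Filter.atTop (nhds ybar) ∧
      ybar ∈ dualCone K ∧ gzero A b χ p ybar = pstar A b K χ p := by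
  have hpc : Continuous p := by
    rw [← continuousOn_univ]
    exact hp.continuousOn isOpen_univ
  -- weak duality
  have hbd0 : BddBelow (p '' {x ∈ χ | A x - b ∈ K}) :=
    ((hχcp.image hpc).bddBelow).mono (Set.image_mono fun x hx => hx.1)
  have hbdz : ∀ z, BddBelow ((fun x => p x - ⟪z, A x - b⟫) '' χ) := fun z =>
    (hχcp.image (by fun_prop)).bddBelow
  have hgle : ∀ z, ∀ x ∈ χ, gzero A b χ p z ≤ p x - ⟪z, A x - b⟫ := fun z x hx =>
    csInf_le (hbdz z) ⟨x, hx, rfl⟩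
  have hweak : ∀ z ∈ dualCone K, ∀ c : ℝ, (∀ x ∈ χ, c ≤ p x - ⟪z, A x - b⟫) →
      c ≤ pstar A b K χ p := by
    intro z hz c hc
    apply le_csInf (hfeas.image p)
    rintro _ ⟨x, hx, rfl⟩
    have := hc x hx.1
    have := hz _ hx.2
    linarith
  have hstep : ∀ k : ℕ, _ := fun k =>
    aux_step hKcv hKcone hPKmem hPK A b hχne hχcp hχcv hp hpc (hμpos (k + 1) (by omega))
      (y (k + 1)) (hx (k + 1) (by omega)) (hL (k + 1) (by omega))
  simp only [← hyrec _ (Nat.le_add_left 1 _)] at hstep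
  choose z hzK c hzc hze hzp using hstep
  obtain ⟨ε, hε⟩ : ∃ ε : ℕ → ℝ, ε = fun k : ℕ => Real.sqrt (2 * ξ (k + 1) * μ (k + 1)) := ⟨_, rfl⟩
  rw [← hε] at hsum
  have hε0 : ∀ k, 0 ≤ ε k := fun k => by rw [hε]; exact Real.sqrt_nonneg _
  have hze' : ∀ k, ‖y (k + 1 + 1) - z k‖ ≤ ε k := fun k => by rw [hε]; exact hze k
  -- Fejer monotonicity
  have hfej : ∀ u ∈ dualCone K, (∀ x ∈ χ, pstar A b K χ p ≤ p x - ⟪u, A x - b⟫) →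
      ∀ k, ‖z k - u‖ ≤ ‖y (k + 1) - u‖ := by
    intro u hu hux k
    have h1 := hzp k u hu _ hux
    have h2 := hweak _ (hzK k) _ (hzc k)
    have h3 : 0 ≤ ⟪z k - y (k + 1), u - z k⟫ := by
      have h4 : 0 ≤ ⟪z k - y (k + 1), u - z k⟫ / μ (k + 1) := by linarith
      have := hμpos (k + 1) (by omega)
      have h5 := mul_nonneg h4 this.le
      rwa [div_mul_cancel₀ _ this.ne'] at h5
    have h4 : ‖y (k + 1) - u‖ ^ 2 = ‖z k - y (k + 1)‖ ^ 2 + 2 * ⟪z k - y (k + 1), u - z k⟫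
        + ‖z k - u‖ ^ 2 := by
      rw [norm_sub_rev (z k) u, ← norm_add_sq_real, norm_sub_rev]
      congr 2; abel
    refine (sq_le_sq₀ (norm_nonneg _) (norm_nonneg _)).1 ?_
    nlinarith [sq_nonneg ‖z k - y (k + 1)‖]
  have hfej2 : ∀ u ∈ dualCone K, (∀ x ∈ χ, pstar A b K χ p ≤ p x - ⟪u, A x - b⟫) →
      ∀ k, ‖y (k + 1 + 1) - u‖ ≤ ‖y (k + 1) - u‖ + ε k := by
    intro u hu hux k
    have h1 := hfej u hu hux k
    have h2 := hze' k
    have h3 := norm_sub_le_norm_sub_add_norm_sub (y (k + 1 + 1)) (z k) u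
    linarith
  have hconv : ∀ u ∈ dualCone K, (∀ x ∈ χ, pstar A b K χ p ≤ p x - ⟪u, A x - b⟫) →
      ∃ l, Filter.Tendsto (fun k => ‖y (k + 1) - u‖) Filter.atTop (nhds l) := by
    intro u hu hux
    have hanti : Antitone fun k => ‖y (k + 1) - u‖ - ∑ i ∈ Finset.range k, ε i := by
      apply antitone_nat_of_succ_le
      intro k
      rw [Finset.sum_range_succ]
      have := hfej2 u hu hux k
      linarith
    have hb : BddBelow (Set.range fun k => ‖y (k + 1) - u‖ - ∑ i ∈ Finset.range k, ε i) := by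
      refine ⟨-∑' i, ε i, ?_⟩
      rintro _ ⟨k, rfl⟩
      have := hsum.sum_le_tsum (Finset.range k) (fun i _ => hε0 i)
      have := norm_nonneg (y (k + 1) - u)
      simp only
      linarith
    have h1 := (tendsto_atTop_ciInf hanti hb).add hsum.hasSum.tendsto_sum_nat
    simp only [sub_add_cancel] at h1
    exact ⟨_, h1⟩
  obtain ⟨u, hu, hug⟩ := hKKT
  have hux : ∀ x ∈ χ, pstar A b K χ p ≤ p x - ⟪u, A x - b⟫ := fun x hx => hug ▸ hgle u x hx
  obtain ⟨l, hl⟩ := hconv u hu hux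
  obtain ⟨R, hR⟩ := hl.bddAbove_range
  have hR' : ∀ k, ‖y (k + 1) - u‖ ≤ R := fun k => hR ⟨k, rfl⟩
  have hR0 : 0 ≤ R := (norm_nonneg _).trans (hR' 0)
  -- values
  have hcv : ∀ k, pstar A b K χ p - 2 * R * R / μ (k + 1) ≤ c k := by
    intro k
    have h1 := hzp k u hu _ hux
    have h2 : ⟪z k - y (k + 1), u - z k⟫ ≤ 2 * R * R := by
      have h3 : ‖u - z k‖ ≤ R := by
        rw [norm_sub_rev]; exact (hfej u hu hux k).trans (hR' k)
      have h4 : ‖z k - y (k + 1)‖ ≤ 2 * R := by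
        have := norm_sub_le_norm_sub_add_norm_sub (z k) u (y (k + 1))
        rw [norm_sub_rev (z k) u, norm_sub_rev u (y (k + 1))] at this
        have := hR' k
        linarith
      refine (real_inner_le_norm _ _).trans ?_
      exact mul_le_mul h4 h3 (norm_nonneg _) (by linarith)
    have h3 := div_le_div_of_nonneg_right h2 (hμpos (k + 1) (by omega)).le
    linarith
  have hmem : ∀ k, y (k + 1 + 1) ∈ closedBall u R := fun k => by
    rw [mem_closedBall, dist_eq_norm]; exact hR' (k + 1)
  obtain ⟨ybar, -, φ, hφ, hlim⟩ := (isCompact_closedBall u R).tendsto_subseq hmem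
  have hφt := hφ.tendsto_atTop
  have hzlim : Filter.Tendsto (fun k => z (φ k)) Filter.atTop (nhds ybar) := by
    have h0 : Filter.Tendsto (fun k => y (k + 1 + 1) - z k) Filter.atTop (nhds 0) :=
      squeeze_zero_norm hze' hsum.tendsto_atTop_zero
    have h1 := hlim.sub (h0.comp hφt)
    simpa [Function.comp_def] using h1
  have hyK : ybar ∈ dualCone K := by
    intro s hs
    exact ge_of_tendsto' (hzlim.inner tendsto_const_nhds) fun k => hzK (φ k) s hs
  have hyx : ∀ x ∈ χ, pstar A b K χ p ≤ p x - ⟪ybar, A x - b⟫ := by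
    intro x hx
    have h1 : Filter.Tendsto (fun k => p x - ⟪z (φ k), A x - b⟫) Filter.atTop
        (nhds (p x - ⟪ybar, A x - b⟫)) :=
      tendsto_const_nhds.sub (hzlim.inner tendsto_const_nhds)
    have h2 : Filter.Tendsto (fun k => pstar A b K χ p - 2 * R * R / μ (φ k + 1)) Filter.atTop
        (nhds (pstar A b K χ p - 0)) := by
      apply tendsto_const_nhds.sub
      apply Filter.Tendsto.const_div_atTop
      exact hμtop.comp ((Filter.tendsto_add_atTop_nat 1).comp hφt)
    rw [sub_zero] at h2
    exact le_of_tendsto_of_tendsto' h2 h1 fun k => (hcv (φ k)).trans (hzc (φ k) x hx)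
  refine ⟨ybar, ?_, hyK, ?_⟩
  · obtain ⟨l', hl'⟩ := hconv ybar hyK hyx
    have h1 : Filter.Tendsto (fun k => ‖y (φ k + 1 + 1) - ybar‖) Filter.atTop (nhds l') :=
      hl'.comp ((Filter.tendsto_add_atTop_nat 1).comp hφt)
    have h2 : Filter.Tendsto (fun k => ‖y (φ k + 1 + 1) - ybar‖) Filter.atTop (nhds 0) :=
      tendsto_iff_norm_sub_tendsto_zero.1 hlim
    rw [tendsto_nhds_unique h1 h2] at hl'
    exact (Filter.tendsto_add_atTop_iff_nat 1).1 (tendsto_iff_norm_sub_tendsto_zero.2 hl')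
  · apply le_antisymm
    · exact hweak ybar hyK _ (hgle ybar)
    · apply le_csInf (hχne.image _)
      rintro _ ⟨x, hx, rfl⟩
      exact hyx x hx
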